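/- arXiv:1401.3286 — 2 statements merged into one kernel-verified Lean document; each statement's English description precedes it below -/
import Mathlib

section
/- There is no positive Borel measure μ on [0,∞) such that 1/φ(n) = ∫_0^∞ n^{-2t} dμ(t) for every positive integer n, where φ denotes Euler's totient function. -/
open MeasureTheory

theorem integral_rpow_le_integral_rpow_of_base_le {α : Type*} [MeasurableSpace α] {μ : Measure α}
    {g : α → ℝ} {x y : ℝ} (hx : 0 < x) (hxy : x ≤ y) (hg : g ≤ᵐ[μ] 0)
    (hint : Integrable (fun a => x ^ g a) μ) :
    ∫ a, y ^ g a ∂μ ≤ ∫ a, x ^ g a ∂μ := by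
  refine integral_mono_of_nonneg (.of_forall fun a => ?_) hint ?_
  · exact Real.rpow_nonneg (hx.le.trans hxy) (g a)
  · filter_upwards [hg] with a ha
    exact Real.rpow_le_rpow_of_nonpos hx hxy ha

/-- The weight sequence `w₁, w₂, …` is given by a measure: `wₙ = ∫_0^∞ n^{-2t} dμ(t)` for a positive
Borel measure `μ`. Only the restriction of `μ` to `[0,∞)` matters, the value `w 0` is unconstrained,
and a divergent integral counts as `0`. -/
def IsGivenByMeasure (w : ℕ → ℝ) : Prop :=
  ∃ μ : Measure ℝ, ∀ n : ℕ, 1 ≤ n → w n = ∫ t in Set.Ici (0 : ℝ), (n : ℝ) ^ (-(2 * t)) ∂μ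

theorem IsGivenByMeasure.apply_le_apply {w : ℕ → ℝ} (hw : IsGivenByMeasure w) {m n : ℕ}
    (hm : 1 ≤ m) (hmn : m ≤ n) (hwm : w m ≠ 0) : w n ≤ w m := by
  obtain ⟨μ, hμ⟩ := hw
  have exponent_nonpos : (fun t : ℝ => -(2 * t)) ≤ᵐ[μ.restrict (Set.Ici 0)] 0 := by
    filter_upwards [ae_restrict_mem measurableSet_Ici] with t (ht : 0 ≤ t)
    exact neg_nonpos.mpr (mul_nonneg zero_le_two ht)
  -- A divergent integral would make `w m` vanish.
  have integrable_m : Integrable (fun t : ℝ => (m : ℝ) ^ (-(2 * t))) (μ.restrict (Set.Ici 0)) :=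
    .of_integral_ne_zero (hμ m hm ▸ hwm)
  rw [hμ n (hm.trans hmn), hμ m hm]
  exact integral_rpow_le_integral_rpow_of_base_le (Nat.cast_pos.mpr hm) (Nat.cast_le.mpr hmn)
    exponent_nonpos integrable_m

/-- There is no positive Borel measure `μ` on `[0,∞)` such that
`1/φ(n) = ∫_0^∞ n^{-2t} dμ(t)` for every positive integer `n`, where `φ` is
Euler's totient function. -/
theorem stmt_7 :
    ¬ ∃ μ : Measure ℝ,
      ∀ n : ℕ, 1 ≤ n →
        (1 : ℝ) / (n.totient : ℝ) =
          ∫ t in Set.Ici (0 : ℝ), (n : ℝ) ^ (-(2 * t)) ∂μ := by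
  intro (h : IsGivenByMeasure fun n => 1 / (n.totient : ℝ))
  have totient_five : Nat.totient 5 = 4 := by decide
  have totient_six : Nat.totient 6 = 2 := by decide
  have inv_totient_le : (1 : ℝ) / Nat.totient 6 ≤ 1 / Nat.totient 5 :=
    h.apply_le_apply (m := 5) (n := 6) (by norm_num) (by norm_num) (by simp [totient_five])
  norm_num [totient_five, totient_six] at inv_totient_le
end

section
/- Let a : ℕ≥1 → ℂ and suppose the partial sums ∑_{n=1}^{M} a_n n^{-s_0} converge as M → ∞ at some complex number s_0. Then on the half-plane Ω_{Re(s_0)} = {s : Re(s) > Re(s_0)} the partial sums converge at every point, the convergence is uniform on every compact subset of Ω_{Re(s_0)}, and the limit function f(s) = lim_{M→∞} ∑_{n=1}^{M} a_n n^{-s} is analytic on Ω_{Re(s_0)}. -/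
open Filter

/-!
With `w = s - s₀`, a tail of the series at `s` is `∑ exp (-(lₖ w)) • bₖ`, where the `bₖ` are the
terms at `s₀` and have bounded partial sums. Although the weights `exp (-(lₖ w))` are complex, their
increments are dominated by those of the decreasing sequence `‖w‖ / re w * exp (-(lₖ re w))`, so
Abel summation bounds the tail by a constant times the first term of that sequence. This is uniform
as long as `re w` stays away from zero and `‖w‖ / re w` stays bounded. The ordinary series is the
case `lₙ = log (n + 1)`.
-/

section AbelSummation

variable {R E : Type*} [SeminormedRing R] [SeminormedAddCommGroup E] [Module R E]
  [IsBoundedSMul R E]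

theorem norm_sum_Ico_smul_le_of_norm_sub_le {g : ℕ → R} {f : ℕ → E} {v : ℕ → ℝ} {C : ℝ}
    (hf : ∀ n, ‖∑ k ∈ Finset.range n, f k‖ ≤ C) (hg : ∀ n, ‖g n‖ ≤ v n)
    (hsub : ∀ n, ‖g (n + 1) - g n‖ ≤ v n - v (n + 1)) (m n : ℕ) :
    ‖∑ k ∈ Finset.Ico m n, g k • f k‖ ≤ 2 * C * v m := by
  have hC : 0 ≤ C := (norm_nonneg _).trans (hf 0)
  have hsmul {r : R} {b : ℝ} (hr : ‖r‖ ≤ b) (k : ℕ) :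
      ‖r • ∑ i ∈ Finset.range k, f i‖ ≤ b * C :=
    (norm_smul_le _ _).trans
      (mul_le_mul hr (hf k) (norm_nonneg _) ((norm_nonneg _).trans hr))
  rcases lt_or_ge m n with hmn | hnm
  · have htelescope : ∑ k ∈ Finset.Ico m (n - 1), (v k - v (k + 1)) = v m - v (n - 1) := by
      simpa [neg_add_eq_sub] using Finset.sum_Ico_sub (-v) (Nat.le_sub_one_of_lt hmn)
    rw [Finset.sum_Ico_by_parts g f hmn]
    calc
      _ ≤ v (n - 1) * C + v m * C + ∑ k ∈ Finset.Ico m (n - 1), (v k - v (k + 1)) * C :=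
        norm_sub_le_of_le (norm_sub_le_of_le (hsmul (hg _) _) (hsmul (hg _) _))
          (norm_sum_le_of_le _ fun k _ => hsmul (hsub k) _)
      _ = 2 * C * v m := by
        rw [← Finset.sum_mul, htelescope]
        ring
  · rw [Finset.Ico_eq_empty_of_le hnm, Finset.sum_empty, norm_zero]
    have := (norm_nonneg _).trans (hg m)
    positivity

end AbelSummation

theorem uniformCauchySeqOn_of_dist_le {α β : Type*} [PseudoMetricSpace β] {F : ℕ → α → β}
    {K : Set α} {b : ℕ → ℝ} (hF : ∀ᶠ m in atTop, ∀ n ≥ m, ∀ x ∈ K, dist (F m x) (F n x) ≤ b m)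
    (hb : Tendsto b atTop (nhds 0)) : UniformCauchySeqOn F atTop K := by
  rw [Metric.uniformCauchySeqOn_iff]
  intro ε hε
  obtain ⟨N, hN⟩ := eventually_atTop.1 (hF.and (hb.eventually_lt_const hε))
  refine ⟨N, fun m hm n hn x hx => ?_⟩
  rcases le_total m n with hmn | hnm
  · exact ((hN m hm).1 n hmn x hx).trans_lt (hN m hm).2
  · rw [dist_comm]
    exact ((hN n hn).1 m hnm x hx).trans_lt (hN n hn).2

theorem norm_exp_neg_mul_sub_exp_neg_mul_le {x y : ℝ} (hxy : x ≤ y) {w : ℂ} (hw : 0 < w.re) :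
    ‖Complex.exp (-(y * w)) - Complex.exp (-(x * w))‖ ≤
      ‖w‖ / w.re * (Real.exp (-(x * w.re)) - Real.exp (-(y * w.re))) := by
  have hderiv (t : ℝ) : HasDerivAt
      (fun t : ℝ => Complex.exp (-(t * w)) - Complex.exp (-(x * w)))
      (Complex.exp (-(t * w)) * -w) t := by
    simpa using ((hasDerivAt_mul_const w).fun_neg.cexp.comp_ofReal (z := t)).sub_const
      (Complex.exp (-(x * w)))
  have hderivBound (t : ℝ) : HasDerivAt
      (fun t : ℝ => ‖w‖ / w.re * (Real.exp (-(x * w.re)) - Real.exp (-(t * w.re))))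
      (Real.exp (-(t * w.re)) * ‖w‖) t := by
    refine (((hasDerivAt_mul_const w.re).fun_neg.exp.const_sub _).const_mul _).congr_deriv ?_
    field_simp
  refine image_norm_le_of_norm_deriv_right_le_deriv_boundary (a := x) (b := y)
    (fun t _ => (hderiv t).continuousAt.continuousWithinAt)
    (fun t _ => (hderiv t).hasDerivWithinAt) (by simp) hderivBound (fun t _ => ?_)
    (Set.right_mem_Icc.2 hxy)
  simp [Complex.norm_exp]

section GeneralDirichletSeries

variable {E : Type*} [NormedAddCommGroup E] [NormedSpace ℂ E]

/-- The partial sum `∑_{n < M} a_n e^{-l_n s}` of the general Dirichlet series with frequencies `l`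
and coefficients `a`; the ordinary Dirichlet series has `l_n = log (n + 1)`. -/
noncomputable def dirichletPartialSum (l : ℕ → ℝ) (a : ℕ → E) (M : ℕ) (s : ℂ) : E :=
  ∑ n ∈ Finset.range M, Complex.exp (-(l n * s)) • a n

variable {l : ℕ → ℝ} {a : ℕ → E} {s₀ : ℂ}

theorem differentiable_dirichletPartialSum (l : ℕ → ℝ) (a : ℕ → E) (M : ℕ) :
    Differentiable ℂ (dirichletPartialSum l a M) := by
  unfold dirichletPartialSum
  fun_prop

theorem norm_dirichletPartialSum_sub_le (hl : Monotone l) {C : ℝ}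
    (hC : ∀ M, ‖dirichletPartialSum l a M s₀‖ ≤ C) {s : ℂ} (hs : s₀.re < s.re) {m n : ℕ}
    (hmn : m ≤ n) :
    ‖dirichletPartialSum l a n s - dirichletPartialSum l a m s‖ ≤
      2 * C * (‖s - s₀‖ / (s - s₀).re * Real.exp (-(l m * (s - s₀).re))) := by
  have hw : 0 < (s - s₀).re := by simpa using hs
  have hsplit (k : ℕ) : Complex.exp (-(l k * s)) • a k =
      Complex.exp (-(l k * (s - s₀))) • Complex.exp (-(l k * s₀)) • a k := by
    rw [smul_smul, ← Complex.exp_add]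
    ring_nf
  have hweight (k : ℕ) : ‖Complex.exp (-(l k * (s - s₀)))‖ ≤
      ‖s - s₀‖ / (s - s₀).re * Real.exp (-(l k * (s - s₀).re)) := by
    have hratio : 1 ≤ ‖s - s₀‖ / (s - s₀).re := (one_le_div hw).2 (Complex.re_le_norm _)
    simpa [Complex.norm_exp] using le_mul_of_one_le_left (Real.exp_nonneg _) hratio
  unfold dirichletPartialSum
  rw [← Finset.sum_Ico_eq_sub _ hmn]
  simp only [hsplit]
  exact norm_sum_Ico_smul_le_of_norm_sub_le hC hweight
    (fun k => (norm_exp_neg_mul_sub_exp_neg_mul_le (hl k.le_succ) hw).trans_eq (mul_sub _ _ _)) m n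

theorem uniformCauchySeqOn_dirichletPartialSum (hl : Monotone l) (hl_top : Tendsto l atTop atTop)
    {C : ℝ} (hC : ∀ M, ‖dirichletPartialSum l a M s₀‖ ≤ C) {K : Set ℂ} {δ H : ℝ} (hδ : 0 < δ)
    (hK : ∀ s ∈ K, δ ≤ (s - s₀).re) (hH : ∀ s ∈ K, ‖s - s₀‖ / (s - s₀).re ≤ H) :
    UniformCauchySeqOn (dirichletPartialSum l a) atTop K := by
  have hC₀ : 0 ≤ C := (norm_nonneg _).trans (hC 0)
  have hlim : Tendsto (fun m => 2 * C * (H * Real.exp (-(l m * δ)))) atTop (nhds 0) := by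
    simpa using ((Real.tendsto_exp_neg_atTop_nhds_zero.comp
      (hl_top.atTop_mul_const hδ)).const_mul H).const_mul (2 * C)
  refine uniformCauchySeqOn_of_dist_le ?_ hlim
  filter_upwards [hl_top.eventually_ge_atTop 0] with m hm n hmn s hs
  have hre : s₀.re < s.re := by simpa using hδ.trans_le (hK s hs)
  rw [dist_comm, dist_eq_norm]
  refine (norm_dirichletPartialSum_sub_le hl hC hre hmn).trans ?_
  have hH₀ : 0 ≤ H := (div_nonneg (norm_nonneg _) (hδ.le.trans (hK s hs))).trans (hH s hs)
  gcongr
  exacts [hH s hs, hK s hs]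

theorem uniformCauchySeqOn_dirichletPartialSum_of_isCompact (hl : Monotone l)
    (hl_top : Tendsto l atTop atTop)
    (hbdd : Bornology.IsBounded (Set.range fun M => dirichletPartialSum l a M s₀)) {K : Set ℂ}
    (hK : K ⊆ {s | s₀.re < s.re}) (hcompact : IsCompact K) :
    UniformCauchySeqOn (dirichletPartialSum l a) atTop K := by
  obtain ⟨C, hC⟩ := hbdd.exists_norm_le
  have hpos : ∀ s ∈ K, 0 < (s - s₀).re := fun s hs => by simpa using hK hs
  have hcont : ContinuousOn (fun s => (s - s₀).re) K := by fun_prop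
  obtain ⟨δ, hδ, hKδ⟩ := hcompact.exists_forall_le' hcont hpos
  obtain ⟨H, hH⟩ := hcompact.bddAbove_image (f := fun s => ‖s - s₀‖ / (s - s₀).re)
    (ContinuousOn.div (by fun_prop) hcont fun s hs => (hpos s hs).ne')
  exact uniformCauchySeqOn_dirichletPartialSum hl hl_top (fun M => hC _ (Set.mem_range_self M)) hδ
    hKδ fun s hs => hH (Set.mem_image_of_mem _ hs)

theorem stmt_14_general [CompleteSpace E] (hl : Monotone l) (hl_top : Tendsto l atTop atTop)
    (hbdd : Bornology.IsBounded (Set.range fun M => dirichletPartialSum l a M s₀)) :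
    ∃ f : ℂ → E,
      (∀ s : ℂ, s₀.re < s.re →
        Tendsto (fun M => dirichletPartialSum l a M s) atTop (nhds (f s))) ∧
      (∀ K : Set ℂ, K ⊆ {s | s₀.re < s.re} → IsCompact K →
        TendstoUniformlyOn (fun M s => dirichletPartialSum l a M s) f atTop K) ∧
      DifferentiableOn ℂ f {s | s₀.re < s.re} := by
  have hcauchy (K : Set ℂ) (hK : K ⊆ {s | s₀.re < s.re}) (hcompact : IsCompact K) :=
    uniformCauchySeqOn_dirichletPartialSum_of_isCompact hl hl_top hbdd hK hcompact
  have hlim (s : ℂ) (hs : s₀.re < s.re) : Tendsto (fun M => dirichletPartialSum l a M s) atTop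
      (nhds (limUnder atTop fun M => dirichletPartialSum l a M s)) :=
    ((hcauchy {s} (Set.singleton_subset_iff.2 hs) isCompact_singleton).cauchySeq
      rfl).tendsto_limUnder
  have hunif (K : Set ℂ) (hK : K ⊆ {s | s₀.re < s.re}) (hcompact : IsCompact K) :=
    (hcauchy K hK hcompact).tendstoUniformlyOn_of_tendsto fun s hs => hlim s (hK hs)
  have hopen : IsOpen {s : ℂ | s₀.re < s.re} := isOpen_lt continuous_const Complex.continuous_re
  exact ⟨_, hlim, hunif,
    ((tendstoLocallyUniformlyOn_iff_forall_isCompact hopen).2 hunif).differentiableOn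
      (Eventually.of_forall fun M => (differentiable_dirichletPartialSum l a M).differentiableOn)
      hopen⟩

end GeneralDirichletSeries

theorem monotone_log_natCast_succ : Monotone fun n : ℕ => Real.log (n + 1 : ℕ) :=
  fun m n hmn => Real.log_le_log (by positivity) (by gcongr)

theorem tendsto_log_natCast_succ_atTop : Tendsto (fun n : ℕ => Real.log (n + 1 : ℕ)) atTop atTop :=
  Real.tendsto_log_atTop.comp (tendsto_natCast_atTop_atTop.comp (tendsto_add_atTop_nat 1))

theorem dirichletPartialSum_log (a : ℕ → ℂ) (M : ℕ) (s : ℂ) :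
    dirichletPartialSum (fun n => Real.log (n + 1 : ℕ)) (fun n => a (n + 1)) M s =
      ∑ n ∈ Finset.range M, a (n + 1) * ((n + 1 : ℕ) : ℂ) ^ (-s) := by
  refine Finset.sum_congr rfl fun n _ => ?_
  rw [Complex.natCast_log, ← mul_neg, ← Complex.cpow_def_of_ne_zero
    (Nat.cast_ne_zero.2 n.succ_ne_zero), smul_eq_mul, mul_comm]

/-- If a Dirichlet series `∑ a_n n^{-s}` converges at `s₀`, then it converges at
every point of the half-plane `Ω_{Re s₀} = {Re s > Re s₀}`, uniformly on compact
subsets, and the limit function is analytic there. -/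
theorem stmt_14 (a : ℕ → ℂ) (s₀ : ℂ)
    (hconv : ∃ L : ℂ,
      Tendsto (fun M : ℕ => ∑ n ∈ Finset.range M, a (n + 1) * ((n + 1 : ℕ) : ℂ) ^ (-s₀))
        atTop (nhds L)) :
    ∃ f : ℂ → ℂ,
      (∀ s : ℂ, s₀.re < s.re →
        Tendsto (fun M : ℕ => ∑ n ∈ Finset.range M, a (n + 1) * ((n + 1 : ℕ) : ℂ) ^ (-s))
          atTop (nhds (f s))) ∧
      (∀ K : Set ℂ, K ⊆ {s : ℂ | s₀.re < s.re} → IsCompact K →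
        TendstoUniformlyOn
          (fun M : ℕ => fun s : ℂ => ∑ n ∈ Finset.range M, a (n + 1) * ((n + 1 : ℕ) : ℂ) ^ (-s))
          f atTop K) ∧
      DifferentiableOn ℂ f {s : ℂ | s₀.re < s.re} := by
  simp only [← dirichletPartialSum_log a] at hconv ⊢
  exact stmt_14_general monotone_log_natCast_succ tendsto_log_natCast_succ_atTop
    (Metric.isBounded_range_of_tendsto _ hconv.choose_spec)
end
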